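/- Assume the generalized-LFT setting: with W_1 = (M − P_1 H)^{-1} P_1 G and W_2 = (N − P_2 S)^{-1} P_2 K, define E = E_0 + F_1 W_1, C_x = C_x^0 + F_3 W_1, A_zx = A_zx^0 + F_4 W_1, C_v = C_v^0 + J_2 W_2, A_zv = A_zv^0 + J_3 W_2. Then the matrix Ξ_∞^[o] = [[E, 0],[−C_x, −C_v],[−Φ A_zx, I_{M_v} − Φ A_zv]] has full column rank if and only if the matrix Ξ_{∞,p}^[o] = [[E_0, F_1, 0, 0],[−C_x^0, −F_3, −C_v^0, −J_2],[−P_1 G, M − P_1 H, 0, 0],[0, 0, −P_2 K, N − P_2 S],[−Φ A_zx^0, −Φ F_4, I_{M_v} − Φ A_zv^0, −Φ J_3]] has full column rank. -/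

import Mathlib

/-!
The columns of `Ξ∞,ₚ⁽ᵒ⁾` indexed by `q₁` and `q₂` carry the internal signals of the two subsystems.
After moving these columns last, and the rows expressing well-posedness last as well, the bottom
right block is `diag(M - P₁ H, N - P₂ S)`, which is invertible, and its Schur complement is exactly
`Ξ∞⁽ᵒ⁾`. Passing to the Schur complement of an invertible block leaves the nullity unchanged, since
kernel vectors are determined by their remaining coordinates. Hence the ranks differ by `q₁ + q₂`.
-/

open Matrix

section Partitioned

variable {R m m₁ m₂ n n₁ n₂ : Type*} [Add R]

theorem fromRows_add_fromRows (A B : Matrix m₁ n R) (A' B' : Matrix m₂ n R) :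
    fromRows A A' + fromRows B B' = fromRows (A + B) (A' + B') := by
  ext (_ | _) _ <;> rfl

theorem fromCols_add_fromCols (A B : Matrix m n₁ R) (A' B' : Matrix m n₂ R) :
    fromCols A A' + fromCols B B' = fromCols (A + B) (A' + B') := by
  ext _ (_ | _) <;> rfl

end Partitioned

section SchurComplement

variable {R l m n : Type*} [CommRing R] [Fintype m] [Fintype n]

theorem rank_add_finrank_ker_mulVecLin [IsDomain R] (A : Matrix l n R) :
    A.rank + Module.finrank R A.mulVecLin.ker = Fintype.card n := by
  rw [Matrix.rank, ← A.mulVecLin.quotKerEquivRange.finrank_eq,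
    Submodule.finrank_quotient_add_finrank, Module.finrank_fintype_fun_eq_card]

variable [DecidableEq n]

theorem ker_mulVecLin_fromBlocks_of_isUnit₂₂ [DecidableEq m] (A : Matrix l m R)
    (B : Matrix l n R) (C : Matrix n m R) {D : Matrix n n R} (hD : IsUnit D) :
    (fromBlocks A B C D).mulVecLin.ker =
      (A - B * D⁻¹ * C).mulVecLin.ker.map (fromRows 1 (-(D⁻¹ * C))).mulVecLin := by
  have hdet : IsUnit D.det := (isUnit_iff_isUnit_det D).1 hD
  have hsolve (x : m → R) (w : n → R) :
      C *ᵥ x + D *ᵥ w = 0 ↔ w = -(D⁻¹ * C) *ᵥ x := by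
    constructor
    · intro h
      rw [neg_mulVec, ← mulVec_mulVec, eq_neg_of_add_eq_zero_left h, mulVec_neg, neg_neg,
        mulVec_mulVec, nonsing_inv_mul _ hdet, one_mulVec]
    · rintro rfl
      rw [neg_mulVec, mulVec_neg, mulVec_mulVec, mul_nonsing_inv_cancel_left _ _ hdet,
        add_neg_cancel]
  have hschur (x : m → R) :
      A *ᵥ x + B *ᵥ (-(D⁻¹ * C) *ᵥ x) = (A - B * D⁻¹ * C) *ᵥ x := by
    rw [mulVec_mulVec, Matrix.mul_neg, ← Matrix.mul_assoc, ← add_mulVec, ← sub_eq_add_neg]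
  ext u
  obtain ⟨x, w, rfl⟩ : ∃ x w, u = Sum.elim x w := ⟨_, _, (Sum.elim_comp_inl_inr u).symm⟩
  simp only [Submodule.mem_map, LinearMap.mem_ker, mulVecLin_apply, fromRows_mulVec, one_mulVec,
    fromBlocks_mulVec, Sum.elim_comp_inl, Sum.elim_comp_inr, ← Sum.elim_zero_zero,
    Sum.elim_eq_iff, hsolve]
  constructor
  · rintro ⟨hx, rfl⟩
    exact ⟨x, hschur x ▸ hx, rfl, rfl⟩
  · rintro ⟨_, hx, rfl, rfl⟩
    exact ⟨(hschur _).trans hx, rfl⟩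

theorem finrank_ker_mulVecLin_fromBlocks_of_isUnit₂₂ (A : Matrix l m R) (B : Matrix l n R)
    (C : Matrix n m R) {D : Matrix n n R} (hD : IsUnit D) :
    Module.finrank R (fromBlocks A B C D).mulVecLin.ker =
      Module.finrank R (A - B * D⁻¹ * C).mulVecLin.ker := by
  classical
  have hinj :
      Function.Injective (fromRows (1 : Matrix m m R) (-(D⁻¹ * C))).mulVecLin := by
    intro x y hxy
    simpa using congrArg (· ∘ Sum.inl) hxy
  rw [ker_mulVecLin_fromBlocks_of_isUnit₂₂ A B C hD]
  exact (Submodule.equivMapOfInjective _ hinj _).finrank_eq.symm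

theorem rank_fromBlocks_of_isUnit₂₂ [IsDomain R] (A : Matrix l m R) (B : Matrix l n R)
    (C : Matrix n m R) {D : Matrix n n R} (hD : IsUnit D) :
    (fromBlocks A B C D).rank = (A - B * D⁻¹ * C).rank + Fintype.card n := by
  have hblocks := rank_add_finrank_ker_mulVecLin (fromBlocks A B C D)
  have hschur := rank_add_finrank_ker_mulVecLin (A - B * D⁻¹ * C)
  rw [finrank_ker_mulVecLin_fromBlocks_of_isUnit₂₂ A B C hD, Fintype.card_sum] at hblocks
  lia

end SchurComplement

section ObservabilityAtInfinity

variable {R e x y z v q₁ q₂ : Type*} [CommRing R]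

/-- The matrix `Ξ∞⁽ᵒ⁾` of a networked system with descriptor matrix `E`, whose full column rank is
the observability condition at infinity. -/
def infinityMatrix [Fintype z] [DecidableEq v] (E : Matrix e x R) (Cx : Matrix y x R)
    (Cv : Matrix y v R) (Azx : Matrix z x R) (Azv : Matrix z v R) (Φ : Matrix v z R) :
    Matrix ((e ⊕ y) ⊕ v) (x ⊕ v) R :=
  fromRows (fromBlocks E 0 (-Cx) (-Cv)) (fromCols (-(Φ * Azx)) (1 - Φ * Azv))

/-- The coefficients in `Ξ∞,ₚ⁽ᵒ⁾` of the internal signals of the two subsystems, on the rows of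
`Ξ∞⁽ᵒ⁾`. -/
def internalSignalMatrix [Fintype z] (F₁ : Matrix e q₁ R) (F₃ : Matrix y q₁ R) (F₄ : Matrix z q₁ R)
    (J₂ : Matrix y q₂ R) (J₃ : Matrix z q₂ R) (Φ : Matrix v z R) :
    Matrix ((e ⊕ y) ⊕ v) (q₁ ⊕ q₂) R :=
  fromRows (fromBlocks F₁ 0 (-F₃) (-J₂)) (fromCols (-(Φ * F₄)) (-(Φ * J₃)))

/-- The matrix `Ξ∞,ₚ⁽ᵒ⁾`, in which the subsystem parameters enter affinely. The blocks `B₁`, `D₁`,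
`B₂`, `D₂` are `P₁ G`, `M - P₁ H`, `P₂ K`, `N - P₂ S` in the paper. -/
def affineInfinityMatrix [Fintype z] [DecidableEq v] (E₀ : Matrix e x R) (Cx₀ : Matrix y x R)
    (Cv₀ : Matrix y v R) (Azx₀ : Matrix z x R) (Azv₀ : Matrix z v R) (Φ : Matrix v z R)
    (F₁ : Matrix e q₁ R) (F₃ : Matrix y q₁ R) (F₄ : Matrix z q₁ R)
    (J₂ : Matrix y q₂ R) (J₃ : Matrix z q₂ R)
    (B₁ : Matrix q₁ x R) (D₁ : Matrix q₁ q₁ R) (B₂ : Matrix q₂ v R) (D₂ : Matrix q₂ q₂ R) :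
    Matrix (e ⊕ y ⊕ q₁ ⊕ q₂ ⊕ v) ((x ⊕ q₁) ⊕ (v ⊕ q₂)) R :=
  fromRows (fromCols (fromCols E₀ F₁) (fromCols 0 0)) <|
  fromRows (fromCols (fromCols (-Cx₀) (-F₃)) (fromCols (-Cv₀) (-J₂))) <|
  fromRows (fromCols (fromCols (-B₁) D₁) (fromCols 0 0)) <|
  fromRows (fromCols (fromCols 0 0) (fromCols (-B₂) D₂)) <|
  fromCols (fromCols (-(Φ * Azx₀)) (-(Φ * F₄))) (fromCols (1 - Φ * Azv₀) (-(Φ * J₃)))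

/-- The reordering of the rows of `Ξ∞,ₚ⁽ᵒ⁾` that puts the two well-posedness rows last. -/
def wellPosednessRowsLast (e y q₁ q₂ v : Type*) :
    e ⊕ y ⊕ q₁ ⊕ q₂ ⊕ v ≃ ((e ⊕ y) ⊕ v) ⊕ (q₁ ⊕ q₂) :=
  (Equiv.sumAssoc e y _).symm.trans <|
    (Equiv.sumCongr (.refl _) ((Equiv.sumAssoc q₁ q₂ v).symm.trans (Equiv.sumComm _ _))).trans
      (Equiv.sumAssoc _ _ _).symm

section Blocks

variable [Fintype z] [DecidableEq v]
  (E₀ : Matrix e x R) (Cx₀ : Matrix y x R) (Cv₀ : Matrix y v R)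
  (Azx₀ : Matrix z x R) (Azv₀ : Matrix z v R) (Φ : Matrix v z R)
  (F₁ : Matrix e q₁ R) (F₃ : Matrix y q₁ R) (F₄ : Matrix z q₁ R)
  (J₂ : Matrix y q₂ R) (J₃ : Matrix z q₂ R)

theorem reindex_affineInfinityMatrix
    (B₁ : Matrix q₁ x R) (D₁ : Matrix q₁ q₁ R) (B₂ : Matrix q₂ v R) (D₂ : Matrix q₂ q₂ R) :
    reindex (wellPosednessRowsLast e y q₁ q₂ v) (Equiv.sumSumSumComm x q₁ v q₂)
        (affineInfinityMatrix E₀ Cx₀ Cv₀ Azx₀ Azv₀ Φ F₁ F₃ F₄ J₂ J₃ B₁ D₁ B₂ D₂) =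
      fromBlocks (infinityMatrix E₀ Cx₀ Cv₀ Azx₀ Azv₀ Φ) (internalSignalMatrix F₁ F₃ F₄ J₂ J₃ Φ)
        (-fromBlocks B₁ 0 0 B₂) (fromBlocks D₁ 0 0 D₂) := by
  rw [fromBlocks_neg, neg_zero, neg_zero]
  ext (((_ | _) | _) | (_ | _)) ((_ | _) | (_ | _)) <;> rfl

theorem infinityMatrix_add_internalSignalMatrix_mul [Fintype q₁] [Fintype q₂]
    (W₁ : Matrix q₁ x R) (W₂ : Matrix q₂ v R) :
    infinityMatrix E₀ Cx₀ Cv₀ Azx₀ Azv₀ Φ +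
        internalSignalMatrix F₁ F₃ F₄ J₂ J₃ Φ * fromBlocks W₁ 0 0 W₂ =
      infinityMatrix (E₀ + F₁ * W₁) (Cx₀ + F₃ * W₁) (Cv₀ + J₂ * W₂)
        (Azx₀ + F₄ * W₁) (Azv₀ + J₃ * W₂) Φ := by
  simp only [infinityMatrix, internalSignalMatrix, fromRows_mul, fromBlocks_multiply,
    fromCols_mul_fromBlocks, fromRows_add_fromRows, fromBlocks_add, fromCols_add_fromCols,
    Matrix.mul_zero, Matrix.zero_mul, add_zero, zero_add, Matrix.mul_add, Matrix.neg_mul,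
    Matrix.mul_assoc, neg_add, sub_eq_add_neg, add_assoc]

theorem lft_observability_infinity_iff_general [IsDomain R] [Fintype x] [Fintype v]
    [Fintype q₁] [Fintype q₂] [DecidableEq q₁] [DecidableEq q₂]
    (B₁ : Matrix q₁ x R) {D₁ : Matrix q₁ q₁ R} (B₂ : Matrix q₂ v R) {D₂ : Matrix q₂ q₂ R}
    (hD₁ : IsUnit D₁) (hD₂ : IsUnit D₂) :
    (affineInfinityMatrix E₀ Cx₀ Cv₀ Azx₀ Azv₀ Φ F₁ F₃ F₄ J₂ J₃ B₁ D₁ B₂ D₂).rank =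
      (infinityMatrix (E₀ + F₁ * (D₁⁻¹ * B₁)) (Cx₀ + F₃ * (D₁⁻¹ * B₁)) (Cv₀ + J₂ * (D₂⁻¹ * B₂))
        (Azx₀ + F₄ * (D₁⁻¹ * B₁)) (Azv₀ + J₃ * (D₂⁻¹ * B₂)) Φ).rank
        + Fintype.card q₁ + Fintype.card q₂ := by
  classical
  have hD : IsUnit (fromBlocks D₁ 0 0 D₂) := isUnit_fromBlocks_zero₂₁.2 ⟨hD₁, hD₂⟩
  have hsolve : (fromBlocks D₁ 0 0 D₂)⁻¹ * fromBlocks B₁ 0 0 B₂ =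
      fromBlocks (D₁⁻¹ * B₁) 0 0 (D₂⁻¹ * B₂) := by
    rw [inv_fromBlocks_zero₂₁_of_isUnit_iff _ _ _ (iff_of_true hD₁ hD₂), fromBlocks_multiply]
    simp
  rw [← rank_reindex (wellPosednessRowsLast e y q₁ q₂ v) (Equiv.sumSumSumComm x q₁ v q₂),
    reindex_affineInfinityMatrix, rank_fromBlocks_of_isUnit₂₂ _ _ _ hD, Matrix.mul_assoc,
    Matrix.mul_neg, Matrix.mul_neg, sub_neg_eq_add, hsolve,
    infinityMatrix_add_internalSignalMatrix_mul, Fintype.card_sum, add_assoc]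

end Blocks

end ObservabilityAtInfinity


/-- **Condition at infinity under generalized LFTs.** With `W₁ = (M − P₁H)⁻¹ P₁G`,
`W₂ = (N − P₂S)⁻¹ P₂K` and `E = E₀ + F₁W₁`, `Cx = Cx₀ + F₃W₁`, `Azx = Azx₀ + F₄W₁`,
`Cv = Cv₀ + J₂W₂`, `Azv = Azv₀ + J₃W₂`, the matrix `Ξ∞⁽ᵒ⁾` has full column rank iff the
parameter-affine matrix `Ξ∞,ₚ⁽ᵒ⁾` has full column rank. -/
theorem lft_observability_infinity_iff
    (Mx Mv Mz My q₁ q₂ r₁ r₂ : ℕ)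
    (E₀ : Matrix (Fin Mx) (Fin Mx) ℂ)
    (Azx₀ : Matrix (Fin Mz) (Fin Mx) ℂ)
    (Azv₀ : Matrix (Fin Mz) (Fin Mv) ℂ)
    (Cx₀ : Matrix (Fin My) (Fin Mx) ℂ)
    (Cv₀ : Matrix (Fin My) (Fin Mv) ℂ)
    (Φ : Matrix (Fin Mv) (Fin Mz) ℂ)
    (F₁ : Matrix (Fin Mx) (Fin q₁) ℂ)
    (F₃ : Matrix (Fin My) (Fin q₁) ℂ)
    (F₄ : Matrix (Fin Mz) (Fin q₁) ℂ)
    (J₂ : Matrix (Fin My) (Fin q₂) ℂ)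
    (J₃ : Matrix (Fin Mz) (Fin q₂) ℂ)
    (P₁ : Matrix (Fin q₁) (Fin r₁) ℂ)
    (G : Matrix (Fin r₁) (Fin Mx) ℂ)
    (H : Matrix (Fin r₁) (Fin q₁) ℂ)
    (M : Matrix (Fin q₁) (Fin q₁) ℂ)
    (P₂ : Matrix (Fin q₂) (Fin r₂) ℂ)
    (K : Matrix (Fin r₂) (Fin Mv) ℂ)
    (S : Matrix (Fin r₂) (Fin q₂) ℂ)
    (N : Matrix (Fin q₂) (Fin q₂) ℂ)
    (hwp₁ : IsUnit (M - P₁ * H)) (hwp₂ : IsUnit (N - P₂ * S))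
    (W₁ : Matrix (Fin q₁) (Fin Mx) ℂ) (hW₁ : W₁ = (M - P₁ * H)⁻¹ * (P₁ * G))
    (W₂ : Matrix (Fin q₂) (Fin Mv) ℂ) (hW₂ : W₂ = (N - P₂ * S)⁻¹ * (P₂ * K))
    (E : Matrix (Fin Mx) (Fin Mx) ℂ) (hE : E = E₀ + F₁ * W₁)
    (Cx : Matrix (Fin My) (Fin Mx) ℂ) (hCx : Cx = Cx₀ + F₃ * W₁)
    (Azx : Matrix (Fin Mz) (Fin Mx) ℂ) (hAzx : Azx = Azx₀ + F₄ * W₁)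
    (Cv : Matrix (Fin My) (Fin Mv) ℂ) (hCv : Cv = Cv₀ + J₂ * W₂)
    (Azv : Matrix (Fin Mz) (Fin Mv) ℂ) (hAzv : Azv = Azv₀ + J₃ * W₂) :
    (Matrix.fromRows
        (Matrix.fromBlocks E 0 (-Cx) (-Cv))
        (Matrix.fromCols (-(Φ * Azx)) ((1 : Matrix (Fin Mv) (Fin Mv) ℂ) - Φ * Azv))).rank
      = Mx + Mv ↔
    (Matrix.fromRows
      (Matrix.fromCols
        (Matrix.fromCols E₀ F₁)
        (Matrix.fromCols 0 0))
      (Matrix.fromRows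
        (Matrix.fromCols
          (Matrix.fromCols (-Cx₀) (-F₃))
          (Matrix.fromCols (-Cv₀) (-J₂)))
        (Matrix.fromRows
          (Matrix.fromCols
            (Matrix.fromCols (-(P₁ * G)) (M - P₁ * H))
            (Matrix.fromCols 0 0))
          (Matrix.fromRows
            (Matrix.fromCols
              (Matrix.fromCols 0 0)
              (Matrix.fromCols (-(P₂ * K)) (N - P₂ * S)))
            (Matrix.fromCols
              (Matrix.fromCols (-(Φ * Azx₀)) (-(Φ * F₄)))
              (Matrix.fromCols ((1 : Matrix (Fin Mv) (Fin Mv) ℂ) - Φ * Azv₀)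
                (-(Φ * J₃)))))))).rank
      = Mx + q₁ + Mv + q₂ := by
  subst hW₁ hW₂ hE hCx hAzx hCv hAzv
  have hrank := lft_observability_infinity_iff_general
    E₀ Cx₀ Cv₀ Azx₀ Azv₀ Φ F₁ F₃ F₄ J₂ J₃ (P₁ * G) (P₂ * K) hwp₁ hwp₂
  simp only [affineInfinityMatrix, infinityMatrix, Fintype.card_fin] at hrank
  lia
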